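/- Let N ≥ 1 and 0 < Λ < 1, and let (u, v) be a classical solution of the system (P_Λ) (no sign or boundedness assumption on u, v). Then u(x)² + v(x)² ≤ 2/(Λ + 1) for every x ∈ ℝ^N. -/

import Mathlib

/-!
Put `c = 2 / (Λ + 1)` and `w = u² + v² - c`. Multiplying the equations by `u` and `v`, and using
`4 u² v² ≤ (u² + v²)²`, gives `Δw ≥ 2 (u Δu + v Δv) ≥ (Λ + 1) w²` wherever `w > 0`. By the
Keller–Osserman phenomenon, such superlinear growth forces `w ≤ 0` on the whole space, without any
assumption on `w` at infinity.

Indeed, suppose `Δw ≥ k w ^ p` wherever `w > 0`, where `p > 1`. Let `h(x) = R² - |x - x₀|²`, let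
`α = 2 / (p - 1)`, and let `h ^ α w` attain its maximum `M > 0` over the ball of radius `R` at `y`.
Then `w - M h ^ (-α)` has a local maximum at `y`, so that `k w ^ p ≤ M Δ(h ^ (-α))` there. Since
`Δ(h ^ (-α)) ≤ C R² h ^ (-α - 2)` and `α p = α + 2`, the powers of `h` cancel and leave
`k M ^ (p - 1) ≤ C R²`. As `M ≥ R ^ (2 α) w(x₀)`, this reads `k w(x₀) ^ (p - 1) ≤ C / R²`, which is
impossible for large `R` if `w(x₀) > 0`.
-/

open scoped RealInnerProductSpace
open Filter

noncomputable section

/-- The Laplacian of `f : ℝ^N → ℝ`, as the sum of the pure second partial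
derivatives in the coordinate directions. -/
def lap (N : ℕ) (f : EuclideanSpace ℝ (Fin N) → ℝ) (x : EuclideanSpace ℝ (Fin N)) : ℝ :=
  ∑ i : Fin N,
    fderiv ℝ (fun y => fderiv ℝ f y (EuclideanSpace.single i 1)) x (EuclideanSpace.single i 1)

/-- `(u, v)` is a classical solution of the system `(P_Λ)` on `ℝ^N`:
`u, v` are `C²` and `-Δu = u - u³ - Λ u v²`, `-Δv = v - v³ - Λ u² v` pointwise. -/
def IsSolution (N : ℕ) (Λ : ℝ) (u v : EuclideanSpace ℝ (Fin N) → ℝ) : Prop :=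
  ContDiff ℝ 2 u ∧ ContDiff ℝ 2 v ∧
  (∀ x, -lap N u x = u x - (u x) ^ 3 - Λ * u x * (v x) ^ 2) ∧
  (∀ x, -lap N v x = v x - (v x) ^ 3 - Λ * (u x) ^ 2 * v x)

/-- Condition `(h∞)`: `u → 1`, `v → 0` as `x_N → +∞` and `u → 0`, `v → 1` as
`x_N → -∞`, uniformly with respect to `x' ∈ ℝ^{N-1}` (the dimension is `N + 1`). -/
def Hinf (N : ℕ) (u v : EuclideanSpace ℝ (Fin (N + 1)) → ℝ) : Prop :=
  (∀ ε : ℝ, 0 < ε → ∃ M : ℝ, ∀ x : EuclideanSpace ℝ (Fin (N + 1)),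
    M ≤ x (Fin.last N) → |u x - 1| < ε ∧ |v x| < ε) ∧
  (∀ ε : ℝ, 0 < ε → ∃ M : ℝ, ∀ x : EuclideanSpace ℝ (Fin (N + 1)),
    x (Fin.last N) ≤ M → |u x| < ε ∧ |v x - 1| < ε)

open Laplacian InnerProductSpace Metric Module
open scoped Topology

section SecondDerivative

lemma deriv_deriv_nonpos_of_isLocalMax {f : ℝ → ℝ} {a : ℝ} (hf : ContinuousAt f a)
    (hmax : IsLocalMax f a) : deriv (deriv f) a ≤ 0 := by
  by_contra! hpos
  -- Otherwise `a` is also a local minimum, so `f` is locally constant.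
  have hmin : IsLocalMin f a := isLocalMin_of_deriv_deriv_pos hpos hmax.deriv_eq_zero hf
  have hconst : f =ᶠ[𝓝 a] fun _ ↦ f a :=
    (hmax.and hmin).mono fun _ ht ↦ le_antisymm ht.1 ht.2
  have hzero : deriv (deriv f) a = 0 := by simpa using hconst.deriv.deriv_eq
  exact hpos.ne' hzero

variable {E F : Type*} [NormedAddCommGroup E] [NormedSpace ℝ E] [NormedAddCommGroup F]
  [NormedSpace ℝ F] {f : E → F} {x : E}

lemma differentiableAt_fderiv_of_contDiffAt_two (hf : ContDiffAt ℝ 2 f x) :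
    DifferentiableAt ℝ (fderiv ℝ f) x :=
  (hf.fderiv_right (m := 1) (by norm_num)).differentiableAt one_ne_zero

lemma eventually_differentiableAt_of_contDiffAt_two (hf : ContDiffAt ℝ 2 f x) :
    ∀ᶠ y in 𝓝 x, DifferentiableAt ℝ f y :=
  (hf.eventually (by simp)).mono fun _ hy ↦ hy.differentiableAt two_ne_zero

lemma deriv_deriv_comp_line (hf : ContDiffAt ℝ 2 f x) (e : E) :
    deriv (deriv fun t : ℝ ↦ f (x + t • e)) 0 = fderiv ℝ (fderiv ℝ f) x e e := by
  have hline : ContinuousAt (fun t : ℝ ↦ x + t • e) 0 := by fun_prop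
  have hfirst : deriv (fun t : ℝ ↦ f (x + t • e)) =ᶠ[𝓝 0] fun t ↦ fderiv ℝ f (x + t • e) e :=
    (hline.eventually (eventually_differentiableAt_of_contDiffAt_two (by simpa using hf))).mono
      fun _ ht ↦ ht.deriv_comp_add_smul
  have hsecond : HasFDerivAt (fun y ↦ fderiv ℝ f y e) ((fderiv ℝ (fderiv ℝ f) x).flip e)
      (x + (0 : ℝ) • e) := by
    simpa using (differentiableAt_fderiv_of_contDiffAt_two hf).hasFDerivAt.clm_apply
      (hasFDerivAt_const e x)
  rw [hfirst.deriv_eq, hsecond.differentiableAt.deriv_comp_add_smul, hsecond.fderiv]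
  rfl

lemma fderiv_fderiv_nonpos_of_isLocalMax {f : E → ℝ} (hf : ContDiffAt ℝ 2 f x)
    (hmax : IsLocalMax f x) (e : E) : fderiv ℝ (fderiv ℝ f) x e e ≤ 0 := by
  have hline : ContinuousAt (fun t : ℝ ↦ x + t • e) 0 := by fun_prop
  have hx : x + (0 : ℝ) • e = x := by simp
  rw [← deriv_deriv_comp_line hf]
  refine deriv_deriv_nonpos_of_isLocalMax (hf.continuousAt.comp_of_eq hline hx) ?_
  exact IsLocalMax.comp_continuous (g := fun t : ℝ ↦ x + t • e) (by rwa [hx]) hline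

lemma fderiv_fderiv_comp_apply_self {g : ℝ → ℝ} {f : E → ℝ} (hg : ContDiffAt ℝ 2 g (f x))
    (hf : ContDiffAt ℝ 2 f x) (e : E) :
    fderiv ℝ (fderiv ℝ (g ∘ f)) x e e =
      deriv (deriv g) (f x) * fderiv ℝ f x e ^ 2 +
        deriv g (f x) * fderiv ℝ (fderiv ℝ f) x e e := by
  have hfirst : fderiv ℝ (g ∘ f) =ᶠ[𝓝 x] fun y ↦ deriv g (f y) • fderiv ℝ f y := by
    filter_upwards [eventually_differentiableAt_of_contDiffAt_two hf,
      hf.continuousAt.eventually (eventually_differentiableAt_of_contDiffAt_two hg)] with y hfy hgy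
    exact (hgy.hasDerivAt.comp_hasFDerivAt y hfy.hasFDerivAt).fderiv
  have hg' : HasDerivAt (deriv g) (deriv (deriv g) (f x)) (f x) :=
    (hg.derivWithin (m := 1) (by norm_num)).differentiableAt one_ne_zero |>.hasDerivAt
  have hsecond : HasFDerivAt (fun y ↦ deriv g (f y) • fderiv ℝ f y)
      (deriv g (f x) • fderiv ℝ (fderiv ℝ f) x +
        (deriv (deriv g) (f x) • fderiv ℝ f x).smulRight (fderiv ℝ f x)) x :=
    (hg'.comp_hasFDerivAt x (hf.differentiableAt two_ne_zero).hasFDerivAt).smul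
      (differentiableAt_fderiv_of_contDiffAt_two hf).hasFDerivAt
  rw [hfirst.fderiv_eq, hsecond.fderiv]
  simp only [add_apply, smul_apply, ContinuousLinearMap.smulRight_apply, smul_eq_mul]
  ring

end SecondDerivative

section Laplacian

variable {E : Type*} [NormedAddCommGroup E] [InnerProductSpace ℝ E] [FiniteDimensional ℝ E]
  {f : E → ℝ} {x : E}

lemma laplacian_eq_sum_fderiv_fderiv {ι : Type*} [Fintype ι] (b : OrthonormalBasis ι ℝ E)
    (f : E → ℝ) (x : E) : Δ f x = ∑ i, fderiv ℝ (fderiv ℝ f) x (b i) (b i) := by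
  simp [laplacian_eq_iteratedFDeriv_orthonormalBasis f b, iteratedFDeriv_two_apply]

lemma sum_sq_apply_orthonormalBasis {ι : Type*} [Fintype ι] (b : OrthonormalBasis ι ℝ E)
    (L : StrongDual ℝ E) : ∑ i, L (b i) ^ 2 = ‖L‖ ^ 2 := by
  rw [← (toDual ℝ E).symm.norm_map L, ← b.sum_sq_inner_left]
  simp

lemma laplacian_nonpos_of_isLocalMax (hf : ContDiffAt ℝ 2 f x) (hmax : IsLocalMax f x) :
    Δ f x ≤ 0 := by
  rw [laplacian_eq_sum_fderiv_fderiv (stdOrthonormalBasis ℝ E)]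
  exact Finset.sum_nonpos fun i _ ↦ fderiv_fderiv_nonpos_of_isLocalMax hf hmax _

lemma laplacian_comp {g : ℝ → ℝ} (hg : ContDiffAt ℝ 2 g (f x)) (hf : ContDiffAt ℝ 2 f x) :
    Δ (g ∘ f) x = deriv (deriv g) (f x) * ‖fderiv ℝ f x‖ ^ 2 + deriv g (f x) * Δ f x := by
  simp only [laplacian_eq_sum_fderiv_fderiv (stdOrthonormalBasis ℝ E),
    fderiv_fderiv_comp_apply_self hg hf, Finset.sum_add_distrib, ← Finset.mul_sum,
    sum_sq_apply_orthonormalBasis]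

lemma laplacian_sq (hf : ContDiffAt ℝ 2 f x) :
    Δ (fun y ↦ f y ^ 2) x = 2 * ‖fderiv ℝ f x‖ ^ 2 + 2 * f x * Δ f x := by
  have hderiv : deriv (fun t : ℝ ↦ t ^ 2) = fun t ↦ 2 * t := by ext1 t; simp
  change Δ ((fun t : ℝ ↦ t ^ 2) ∘ f) x = _
  rw [laplacian_comp (by fun_prop) hf, hderiv]
  simp

lemma laplacian_norm_sub_sq (x₀ x : E) :
    Δ (fun y : E ↦ ‖y - x₀‖ ^ 2) x = 2 * finrank ℝ E := by
  let L : E →L[ℝ] E →L[ℝ] ℝ := 2 • innerSL ℝ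
  have hfirst : fderiv ℝ (fun y : E ↦ ‖y - x₀‖ ^ 2) = fun y ↦ L (y - x₀) := by
    ext1 y
    rw [fderiv_comp_sub (f := fun z : E ↦ ‖z‖ ^ 2), fderiv_norm_sq]
    rfl
  have hsecond : fderiv ℝ (fun y ↦ L (y - x₀)) x = L := by
    rw [fderiv_comp_sub (f := L), L.fderiv]
  rw [laplacian_eq_sum_fderiv_fderiv (stdOrthonormalBasis ℝ E), hfirst, hsecond]
  simp [L, innerSL_apply_apply ℝ, mul_comm]

lemma lap_eq_laplacian {N : ℕ} {f : EuclideanSpace ℝ (Fin N) → ℝ} (hf : ContDiff ℝ 2 f) :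
    lap N f = Δ f := by
  ext x
  rw [laplacian_eq_sum_fderiv_fderiv (EuclideanSpace.basisFun (Fin N) ℝ)]
  refine Finset.sum_congr rfl fun i _ ↦ ?_
  have := ((differentiableAt_fderiv_of_contDiffAt_two hf.contDiffAt).hasFDerivAt.clm_apply
    (hasFDerivAt_const (EuclideanSpace.single i (1 : ℝ)) x)).fderiv
  simp [this]

end Laplacian

section KellerOsserman

variable {E : Type*} [NormedAddCommGroup E]

/-- The defining function `R² - |x - x₀|²` of the ball of radius `R` around `x₀`. Its negative
powers are the barriers that blow up on the boundary of the ball. -/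
def ballDefect (x₀ : E) (R : ℝ) (x : E) : ℝ :=
  R ^ 2 - ‖x - x₀‖ ^ 2

/-- The constant `C` of the barrier inequality `Δ(h ^ (-α)) ≤ C R² h ^ (-α - 2)` in dimension `n`,
where `h = ballDefect x₀ R`. -/
def barrierConst (n : ℕ) (α : ℝ) : ℝ :=
  2 * α * (2 * (α + 1) + n)

variable {x₀ x : E} {R α : ℝ}

lemma ballDefect_self : ballDefect x₀ R x₀ = R ^ 2 := by
  simp [ballDefect]

lemma ballDefect_pos (hx : x ∈ ball x₀ R) : 0 < ballDefect x₀ R x := by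
  rw [mem_ball_iff_norm] at hx
  exact sub_pos.2 (pow_lt_pow_left₀ hx (norm_nonneg _) two_ne_zero)

lemma ballDefect_eq_zero_of_mem_sphere (hx : x ∈ sphere x₀ R) : ballDefect x₀ R x = 0 := by
  rw [ballDefect, mem_sphere_iff_norm.1 hx, sub_self]

variable [InnerProductSpace ℝ E]

lemma contDiff_ballDefect : ContDiff ℝ 2 (ballDefect x₀ R) :=
  contDiff_const.sub ((contDiff_id.sub contDiff_const).norm_sq ℝ)

lemma norm_fderiv_ballDefect : ‖fderiv ℝ (ballDefect x₀ R) x‖ = 2 * ‖x - x₀‖ := by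
  have hfderiv : fderiv ℝ (ballDefect x₀ R) x = -(2 • innerSL ℝ (x - x₀)) := by
    unfold ballDefect
    rw [fderiv_const_sub, fderiv_comp_sub (f := fun z : E ↦ ‖z‖ ^ 2), fderiv_norm_sq_apply]
  rw [hfderiv, norm_neg, ← Nat.cast_smul_eq_nsmul ℝ, norm_smul, innerSL_apply_norm]
  simp

variable [FiniteDimensional ℝ E]

lemma laplacian_ballDefect : Δ (ballDefect x₀ R) x = -(2 * finrank ℝ E) := by
  have hnorm : ContDiff ℝ 2 fun y : E ↦ ‖y - x₀‖ ^ 2 :=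
    (contDiff_id.sub contDiff_const).norm_sq ℝ
  change Δ ((fun _ : E ↦ R ^ 2) - fun y : E ↦ ‖y - x₀‖ ^ 2) x = _
  rw [contDiffAt_const.laplacian_sub hnorm.contDiffAt, laplacian_const, laplacian_norm_sub_sq]
  simp

lemma laplacian_ballDefect_rpow (hx : x ∈ ball x₀ R) :
    Δ (fun y ↦ ballDefect x₀ R y ^ (-α)) x =
      2 * α * (2 * (α + 1) * ‖x - x₀‖ ^ 2 + finrank ℝ E * ballDefect x₀ R x) *
        ballDefect x₀ R x ^ (-α - 2) := by
  have hpos := ballDefect_pos hx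
  have hderiv : deriv (fun t : ℝ ↦ t ^ (-α)) = fun t ↦ -α * t ^ (-α - 1) := Real.deriv_rpow_const' _
  have hpow : ballDefect x₀ R x ^ (-α - 1) = ballDefect x₀ R x ^ (-α - 2) * ballDefect x₀ R x := by
    rw [← Real.rpow_add_one hpos.ne']
    ring_nf
  change Δ ((fun t : ℝ ↦ t ^ (-α)) ∘ ballDefect x₀ R) x = _
  rw [laplacian_comp (Real.contDiffAt_rpow_const_of_ne hpos.ne') contDiff_ballDefect.contDiffAt,
    hderiv, deriv_const_mul_field, Real.deriv_rpow_const, norm_fderiv_ballDefect,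
    laplacian_ballDefect, sub_sub, one_add_one_eq_two]
  simp only [hpow]
  ring

lemma laplacian_ballDefect_rpow_le (hα : 0 ≤ α) (hx : x ∈ ball x₀ R) :
    Δ (fun y ↦ ballDefect x₀ R y ^ (-α)) x ≤
      barrierConst (finrank ℝ E) α * R ^ 2 * ballDefect x₀ R x ^ (-α - 2) := by
  have hpos := ballDefect_pos hx
  have hnorm : ‖x - x₀‖ ^ 2 ≤ R ^ 2 := (sub_pos.1 hpos).le
  have hdefect : ballDefect x₀ R x ≤ R ^ 2 := sub_le_self _ (sq_nonneg _)
  calc Δ (fun y ↦ ballDefect x₀ R y ^ (-α)) x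
      = 2 * α * (2 * (α + 1) * ‖x - x₀‖ ^ 2 + finrank ℝ E * ballDefect x₀ R x) *
          ballDefect x₀ R x ^ (-α - 2) := laplacian_ballDefect_rpow hx
    _ ≤ 2 * α * (2 * (α + 1) * R ^ 2 + finrank ℝ E * R ^ 2) *
          ballDefect x₀ R x ^ (-α - 2) := by gcongr
    _ = barrierConst (finrank ℝ E) α * R ^ 2 * ballDefect x₀ R x ^ (-α - 2) := by
      rw [barrierConst]
      ring

variable {w : E → ℝ} {k M : ℝ}

lemma exists_isLocalMax_sub_barrier (hα : 0 < α) (hR : 0 < R)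
    (hw : ContinuousOn w (closedBall x₀ R)) (hx₀ : 0 < w x₀) :
    ∃ y ∈ ball x₀ R, ∃ M, (R ^ 2) ^ α * w x₀ ≤ M ∧ w y = M * ballDefect x₀ R y ^ (-α) ∧
      IsLocalMax (fun z ↦ w z - M * ballDefect x₀ R z ^ (-α)) y := by
  let g : E → ℝ := fun z ↦ ballDefect x₀ R z ^ α * w z
  have hg : ContinuousOn g (closedBall x₀ R) :=
    (contDiff_ballDefect.continuous.rpow_const fun _ ↦ .inr hα.le).continuousOn.mul hw
  have hdiv {z : E} (hz : z ∈ ball x₀ R) : w z = g z * ballDefect x₀ R z ^ (-α) := by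
    have := (Real.rpow_pos_of_pos (ballDefect_pos hz) α).ne'
    rw [Real.rpow_neg (ballDefect_pos hz).le]
    simp only [g]
    field_simp
  have hmem : x₀ ∈ closedBall x₀ R := mem_closedBall_self hR.le
  obtain ⟨y, hy, hmax⟩ := (isCompact_closedBall x₀ R).exists_isMaxOn ⟨x₀, hmem⟩ hg
  have hle : (R ^ 2) ^ α * w x₀ ≤ g y := by simpa [g, ballDefect_self] using hmax hmem
  have hgy : 0 < g y := lt_of_lt_of_le (by positivity) hle
  have hyball : y ∈ ball x₀ R := by
    refine (mem_closedBall.1 hy).lt_of_ne fun hsphere ↦ hgy.ne' ?_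
    simp [g, ballDefect_eq_zero_of_mem_sphere (mem_sphere.2 hsphere), Real.zero_rpow hα.ne']
  refine ⟨y, hyball, g y, hle, hdiv hyball, ?_⟩
  filter_upwards [isOpen_ball.mem_nhds hyball] with z hz
  have hbarrier : 0 ≤ ballDefect x₀ R z ^ (-α) := Real.rpow_nonneg (ballDefect_pos hz).le _
  rw [← hdiv hyball, sub_self, hdiv hz, sub_nonpos]
  exact mul_le_mul_of_nonneg_right (hmax (ball_subset_closedBall hz)) hbarrier

lemma mul_rpow_le_of_isLocalMax_sub_barrier (hα : 0 < α) (hM : 0 < M) (hx : x ∈ ball x₀ R)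
    (hw : ContDiffAt ℝ 2 w x) (hwx : w x = M * ballDefect x₀ R x ^ (-α))
    (hmax : IsLocalMax (fun z ↦ w z - M * ballDefect x₀ R z ^ (-α)) x)
    (hΔ : k * w x ^ (1 + 2 / α) ≤ Δ w x) :
    k * M ^ (2 / α) ≤ barrierConst (finrank ℝ E) α * R ^ 2 := by
  have hpos := ballDefect_pos hx
  set φ : E → ℝ := fun z ↦ ballDefect x₀ R z ^ (-α)
  have hφ : ContDiffAt ℝ 2 φ x := contDiff_ballDefect.contDiffAt.rpow_const_of_ne hpos.ne'
  have hMφ : ContDiffAt ℝ 2 (M • φ) x := hφ.const_smul M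
  have hΔφ : Δ w x ≤ M * Δ φ x := by
    have hle : Δ (w - M • φ) x ≤ 0 := laplacian_nonpos_of_isLocalMax (hw.sub hMφ) hmax
    rwa [hw.laplacian_sub hMφ, laplacian_smul M hφ, sub_nonpos] at hle
  have hpow : w x ^ (1 + 2 / α) =
      M ^ (2 / α) * (M * ballDefect x₀ R x ^ (-α - 2)) := by
    have hexp : -α * (1 + 2 / α) = -α - 2 := by field_simp; ring
    rw [hwx, Real.mul_rpow hM.le (Real.rpow_nonneg hpos.le _), ← Real.rpow_mul hpos.le, hexp,
      Real.rpow_one_add' hM.le (by positivity)]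
    ring
  have hfactor : 0 < M * ballDefect x₀ R x ^ (-α - 2) := by positivity
  refine le_of_mul_le_mul_right ?_ hfactor
  calc k * M ^ (2 / α) * (M * ballDefect x₀ R x ^ (-α - 2))
      = k * w x ^ (1 + 2 / α) := by rw [hpow]; ring
    _ ≤ M * Δ φ x := hΔ.trans hΔφ
    _ ≤ M * (barrierConst (finrank ℝ E) α * R ^ 2 * ballDefect x₀ R x ^ (-α - 2)) :=
      mul_le_mul_of_nonneg_left (laplacian_ballDefect_rpow_le hα.le hx) hM.le
    _ = barrierConst (finrank ℝ E) α * R ^ 2 * (M * ballDefect x₀ R x ^ (-α - 2)) := by ring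

theorem keller_osserman_estimate (hα : 0 < α) (hk : 0 ≤ k) (hR : 0 < R)
    (hcont : ContinuousOn w (closedBall x₀ R)) (hw : ContDiffOn ℝ 2 w (ball x₀ R))
    (hΔ : ∀ y ∈ ball x₀ R, 0 < w y → k * w y ^ (1 + 2 / α) ≤ Δ w y) (hx₀ : 0 < w x₀) :
    k * w x₀ ^ (2 / α) * R ^ 2 ≤ barrierConst (finrank ℝ E) α := by
  obtain ⟨y, hy, M, hM, hwy, hmax⟩ := exists_isLocalMax_sub_barrier hα hR hcont hx₀
  have hMpos : 0 < M := lt_of_lt_of_le (by positivity) hM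
  have hwpos : 0 < w y := hwy ▸ mul_pos hMpos (Real.rpow_pos_of_pos (ballDefect_pos hy) _)
  have hbound := mul_rpow_le_of_isLocalMax_sub_barrier hα hMpos hy
    (hw.contDiffAt (isOpen_ball.mem_nhds hy)) hwy hmax (hΔ y hy hwpos)
  have hpow : ((R ^ 2) ^ α * w x₀) ^ (2 / α) = (R ^ 2) ^ 2 * w x₀ ^ (2 / α) := by
    rw [Real.mul_rpow (by positivity) hx₀.le, ← Real.rpow_mul (by positivity),
      mul_div_cancel₀ _ hα.ne', Real.rpow_two]
  refine le_of_mul_le_mul_right ?_ (pow_pos hR 2)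
  calc k * w x₀ ^ (2 / α) * R ^ 2 * R ^ 2
      = k * ((R ^ 2) ^ α * w x₀) ^ (2 / α) := by rw [hpow]; ring
    _ ≤ k * M ^ (2 / α) := by gcongr
    _ ≤ barrierConst (finrank ℝ E) α * R ^ 2 := hbound

theorem nonpos_of_mul_rpow_le_laplacian {p : ℝ} (hp : 1 < p) (hk : 0 < k) (hw : ContDiff ℝ 2 w)
    (hΔ : ∀ y, 0 < w y → k * w y ^ p ≤ Δ w y) (x : E) : w x ≤ 0 := by
  by_contra! hx
  obtain ⟨α, hα, rfl⟩ : ∃ α : ℝ, 0 < α ∧ p = 1 + 2 / α := by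
    have : 0 < p - 1 := sub_pos.2 hp
    exact ⟨2 / (p - 1), by positivity, by field_simp; ring⟩
  have hcoeff : 0 < k * w x ^ (2 / α) := by positivity
  have htendsto : Tendsto (fun R : ℝ ↦ k * w x ^ (2 / α) * R ^ 2) atTop atTop :=
    (tendsto_pow_atTop two_ne_zero).const_mul_atTop hcoeff
  obtain ⟨R, hR, hlarge⟩ := ((eventually_gt_atTop 0).and
    (htendsto.eventually_gt_atTop (barrierConst (finrank ℝ E) α))).exists
  exact hlarge.not_ge (keller_osserman_estimate hα hk.le hR hw.continuous.continuousOn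
    hw.contDiffOn (fun y _ ↦ hΔ y) hx)

end KellerOsserman

section AllenCahnSystem

lemma allen_cahn_reaction_lower_bound {Λ a b : ℝ} (hΛ₀ : -1 < Λ) (hΛ₁ : Λ ≤ 1)
    (h : 2 / (Λ + 1) ≤ a ^ 2 + b ^ 2) :
    (Λ + 1) * (a ^ 2 + b ^ 2 - 2 / (Λ + 1)) ^ 2 ≤
      -2 * a * (a - a ^ 3 - Λ * a * b ^ 2) - 2 * b * (b - b ^ 3 - Λ * a ^ 2 * b) := by
  have hΛ : 0 < Λ + 1 := by linarith
  set c := 2 / (Λ + 1)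
  set s := a ^ 2 + b ^ 2 with hs
  have hcΛ : (Λ + 1) * c = 2 := mul_div_cancel₀ 2 hΛ.ne'
  calc (Λ + 1) * (s - c) ^ 2
      ≤ (Λ + 1) * (s - c) ^ 2 + (Λ + 1) * c * (s - c) + (1 - Λ) * (a ^ 2 - b ^ 2) ^ 2 := by
        have h₁ : 0 ≤ (Λ + 1) * c * (s - c) := by
          rw [hcΛ]
          exact mul_nonneg two_pos.le (sub_nonneg.2 h)
        have h₂ : 0 ≤ (1 - Λ) * (a ^ 2 - b ^ 2) ^ 2 :=
          mul_nonneg (sub_nonneg.2 hΛ₁) (sq_nonneg _)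
        linarith
    _ = (Λ + 1) * s ^ 2 - (Λ + 1) * c * s + (1 - Λ) * (a ^ 2 - b ^ 2) ^ 2 := by ring
    _ = -2 * a * (a - a ^ 3 - Λ * a * b ^ 2) - 2 * b * (b - b ^ 3 - Λ * a ^ 2 * b) := by
        rw [hcΛ, hs]
        ring

variable {E : Type*} [NormedAddCommGroup E] [InnerProductSpace ℝ E] [FiniteDimensional ℝ E]
  {u v : E → ℝ}

lemma laplacian_sq_add_sq_sub_const_ge {x : E} (hu : ContDiffAt ℝ 2 u x)
    (hv : ContDiffAt ℝ 2 v x) (c : ℝ) :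
    2 * u x * Δ u x + 2 * v x * Δ v x ≤ Δ (fun y ↦ u y ^ 2 + v y ^ 2 - c) x := by
  have hu₂ : ContDiffAt ℝ 2 (fun y ↦ u y ^ 2) x := hu.pow 2
  have hv₂ : ContDiffAt ℝ 2 (fun y ↦ v y ^ 2) x := hv.pow 2
  have hadd : ContDiffAt ℝ 2 ((fun y ↦ u y ^ 2) + fun y ↦ v y ^ 2) x := hu₂.add hv₂
  calc 2 * u x * Δ u x + 2 * v x * Δ v x
      ≤ (2 * ‖fderiv ℝ u x‖ ^ 2 + 2 * u x * Δ u x) +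
          (2 * ‖fderiv ℝ v x‖ ^ 2 + 2 * v x * Δ v x) := by
        linarith [sq_nonneg ‖fderiv ℝ u x‖, sq_nonneg ‖fderiv ℝ v x‖]
    _ = Δ (((fun y : E ↦ u y ^ 2) + fun y : E ↦ v y ^ 2) - fun _ : E ↦ c) x := by
        rw [hadd.laplacian_sub contDiffAt_const, hu₂.laplacian_add hv₂, laplacian_sq hu,
          laplacian_sq hv, laplacian_const, Pi.zero_apply, sub_zero]

theorem stmt_4_general {Λ : ℝ} (hΛ₀ : -1 < Λ) (hΛ₁ : Λ ≤ 1) (hu : ContDiff ℝ 2 u)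
    (hv : ContDiff ℝ 2 v)
    (hΔu : ∀ x, -Δ u x = u x - u x ^ 3 - Λ * u x * v x ^ 2)
    (hΔv : ∀ x, -Δ v x = v x - v x ^ 3 - Λ * u x ^ 2 * v x) (x : E) :
    u x ^ 2 + v x ^ 2 ≤ 2 / (Λ + 1) := by
  have hw : ContDiff ℝ 2 fun y ↦ u y ^ 2 + v y ^ 2 - 2 / (Λ + 1) := by fun_prop
  refine sub_nonpos.1 (nonpos_of_mul_rpow_le_laplacian one_lt_two (by linarith : 0 < Λ + 1) hw
    (fun y hy ↦ ?_) x)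
  calc (Λ + 1) * (u y ^ 2 + v y ^ 2 - 2 / (Λ + 1)) ^ (2 : ℝ)
      ≤ 2 * u y * Δ u y + 2 * v y * Δ v y := by
        have := allen_cahn_reaction_lower_bound hΛ₀ hΛ₁ (sub_pos.1 hy).le
        rw [← hΔu, ← hΔv] at this
        rw [Real.rpow_two]
        linarith
    _ ≤ _ := laplacian_sq_add_sq_sub_const_ge hu.contDiffAt hv.contDiffAt _

end AllenCahnSystem

/-- Theorem 1.3 (iii): universal bound `u² + v² ≤ 2/(Λ+1)` for `0 < Λ < 1`. -/
theorem stmt_4 (N : ℕ) (Λ : ℝ) (hΛ₀ : 0 < Λ) (hΛ₁ : Λ < 1)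
    (u v : EuclideanSpace ℝ (Fin (N + 1)) → ℝ)
    (hsol : IsSolution (N + 1) Λ u v) :
    ∀ x, (u x) ^ 2 + (v x) ^ 2 ≤ 2 / (Λ + 1) := by
  obtain ⟨hu, hv, hlapu, hlapv⟩ := hsol
  exact stmt_4_general (by linarith) hΛ₁.le hu hv (lap_eq_laplacian hu ▸ hlapu)
    (lap_eq_laplacian hv ▸ hlapv)
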